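/- Let X be a compact Hausdorff topological space and μ a finite Borel measure on X with full support. Let φ : X → M₃(ℝ) be a continuous map into the 3×3 real matrices such that the set {x ∈ X : rank φ(x) ≥ 2} is dense in X. If ψ : X → ℝ is a continuous function such that ∫_X trace(adjugate(φ(x)) · B(x)) ψ(x) dμ(x) = 0 for every continuous map B : X → M₃(ℝ), then ψ ≡ 0 on X. -/

import Mathlib

/-!
The integrand is `trace (A x * B x)` with `A = ψ • adjugate φ`. Since the trace pairing is
nondegenerate and `μ` charges every nonempty open set, orthogonality to all continuous `B` forces
`A = 0`. An `n × n` matrix has nonzero adjugate exactly when its rank is at least `n - 1`: the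
adjugate is antimultiplicative, so invertible factors reduce this to diagonal matrices, whose
adjugates are read off entry by entry. Hence `ψ` vanishes on a dense set.
-/

open MeasureTheory Matrix

section Adjugate

variable {n K : Type*} [Fintype n] [DecidableEq n] [Nonempty n] [Field K]

lemma adjugate_diagonal_ne_zero_iff_card_le_rank_add_one (d : n → K) :
    adjugate (diagonal d) ≠ 0 ↔ Fintype.card n ≤ (diagonal d).rank + 1 := by
  classical
  have hcard : (diagonal d).rank + (Finset.univ.filter (d · = 0)).card = Fintype.card n := by
    rw [rank_diagonal, Fintype.card_subtype, add_comm]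
    exact Finset.card_filter_add_card_filter_not _
  calc
    adjugate (diagonal d) ≠ 0 ↔ ∃ i, ∀ j, j ≠ i → d j ≠ 0 := by
      simp [funext_iff, Finset.prod_eq_zero_iff]
    _ ↔ ∃ i, Finset.univ.filter (d · = 0) ⊆ {i} := by
      simp only [Finset.subset_iff, Finset.mem_filter_univ, Finset.mem_singleton, ne_eq,
        not_imp_not]
    _ ↔ (Finset.univ.filter (d · = 0)).card ≤ 1 := Finset.card_le_one_iff_subset_singleton.symm
    _ ↔ Fintype.card n ≤ (diagonal d).rank + 1 := by lia

lemma adjugate_ne_zero_iff_card_le_rank_add_one (A : Matrix n n K) :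
    A.adjugate ≠ 0 ↔ Fintype.card n ≤ A.rank + 1 := by
  obtain ⟨L, R, d, hA⟩ := Pivot.exists_list_transvec_mul_diagonal_mul_list_transvec A
  set P := (L.map TransvectionStruct.toMatrix).prod
  set Q := (R.map TransvectionStruct.toMatrix).prod
  have hP : P.det = 1 := TransvectionStruct.det_toMatrix_prod L
  have hQ : Q.det = 1 := TransvectionStruct.det_toMatrix_prod R
  have hadjP : IsUnit P.adjugate := by simp [isUnit_iff_isUnit_det, det_adjugate, hP]
  have hadjQ : IsUnit Q.adjugate := by simp [isUnit_iff_isUnit_det, det_adjugate, hQ]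
  have hadj : A.adjugate = 0 ↔ adjugate (diagonal d) = 0 := by
    rw [hA, adjugate_mul_distrib, adjugate_mul_distrib, hadjQ.mul_right_eq_zero,
      hadjP.mul_left_eq_zero]
  have hrank : A.rank = (diagonal d).rank := by
    rw [hA, rank_mul_eq_left_of_isUnit_det _ _ (by simp [hQ]),
      rank_mul_eq_right_of_isUnit_det _ _ (by simp [hP])]
  rw [ne_eq, hadj, hrank]
  exact adjugate_diagonal_ne_zero_iff_card_le_rank_add_one d

end Adjugate

section TestFields

variable {X 𝕜 : Type*} [TopologicalSpace X] [MeasurableSpace X] [OpensMeasurableSpace X] [RCLike 𝕜]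
  (μ : Measure X) [IsFiniteMeasure μ] [μ.IsOpenPosMeasure]

theorem eq_zero_of_forall_integral_mul_eq_zero (f : C(X, 𝕜))
    (hf : ∀ g : C(X, 𝕜), Integrable (fun x => f x * g x) μ → ∫ x, f x * g x ∂μ = 0) :
    f = 0 := by
  have hden : ∀ x, 1 + ‖f x‖ ^ 2 ≠ 0 := fun x => by positivity
  let w : X → ℝ := fun x => ‖f x‖ ^ 2 / (1 + ‖f x‖ ^ 2)
  -- Dividing by `1 + ‖f‖ ^ 2` makes `f * g` bounded, hence integrable even when `f` is not.
  let g : C(X, 𝕜) :=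
    ⟨fun x => star (f x) * ((1 + ‖f x‖ ^ 2)⁻¹ : ℝ), by fun_prop (disch := assumption)⟩
  have hfg : ∀ x, f x * g x = (w x : 𝕜) := fun x => by
    simp [g, w, ← mul_assoc, RCLike.mul_conj, div_eq_mul_inv]
  have hw_cont : Continuous w := by fun_prop (disch := assumption)
  have hw_nonneg : 0 ≤ w := fun x => by positivity
  have hw_int : Integrable w μ := by
    refine .of_bound hw_cont.aestronglyMeasurable 1 (.of_forall fun x => ?_)
    rw [Real.norm_of_nonneg (hw_nonneg x)]
    exact div_le_one_of_le₀ (by linarith) (by positivity)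
  have hw_integral : ∫ x, w x ∂μ = 0 := by
    have := hf g (by simpa only [hfg] using hw_int.ofReal)
    simpa only [hfg, integral_ofReal, RCLike.ofReal_eq_zero] using this
  have hw : w = 0 := (hw_cont.ae_eq_iff_eq μ continuous_zero).1
    ((integral_eq_zero_iff_of_nonneg hw_nonneg hw_int).1 hw_integral)
  ext x
  simpa [w, hden x] using congrFun hw x

theorem eq_zero_of_forall_integral_trace_mul_eq_zero {m n : Type*} [Fintype m] [Fintype n]
    (A : C(X, Matrix m n 𝕜))
    (hA : ∀ B : C(X, Matrix n m 𝕜), Integrable (fun x => (A x * B x).trace) μ →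
      ∫ x, (A x * B x).trace ∂μ = 0) :
    A = 0 := by
  classical
  ext x i j
  let entry : C(X, 𝕜) := ⟨fun x => A x i j, A.continuous.matrix_elem i j⟩
  suffices entry = 0 from DFunLike.congr_fun this x
  refine eq_zero_of_forall_integral_mul_eq_zero μ entry fun g => ?_
  let B : C(X, Matrix n m 𝕜) :=
    ⟨fun x => g x • single j i 1, g.continuous.smul continuous_const⟩
  have htrace : ∀ x, (A x * B x).trace = entry x * g x := fun x => by
    simp [B, entry, trace_mul_single, mul_comm]
  simpa only [htrace] using hA B

theorem statement5_general {n : Type*} [Fintype n] [DecidableEq n] [Nonempty n]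
    (φ : C(X, Matrix n n 𝕜)) (hφ : Dense {x | Fintype.card n ≤ (φ x).rank + 1}) (ψ : C(X, 𝕜))
    (h : ∀ B : C(X, Matrix n n 𝕜),
      Integrable (fun x => ((φ x).adjugate * B x).trace * ψ x) μ →
        ∫ x, ((φ x).adjugate * B x).trace * ψ x ∂μ = 0) :
    ψ = 0 := by
  let A : C(X, Matrix n n 𝕜) :=
    ⟨fun x => ψ x • (φ x).adjugate, ψ.continuous.smul φ.continuous.matrix_adjugate⟩
  have htrace : ∀ (B : C(X, Matrix n n 𝕜)) x,
      (A x * B x).trace = ((φ x).adjugate * B x).trace * ψ x := fun B x => by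
    simp [A, mul_comm]
  have hA : A = 0 := eq_zero_of_forall_integral_trace_mul_eq_zero μ A fun B => by
    simpa only [htrace] using h B
  refine DFunLike.coe_injective (ψ.continuous.ext_on hφ continuous_zero fun x hx => ?_)
  have hadj : (φ x).adjugate ≠ 0 := (adjugate_ne_zero_iff_card_le_rank_add_one _).2 hx
  exact (smul_eq_zero.1 (DFunLike.congr_fun hA x)).resolve_right hadj

end TestFields

/-- analytic core of Proposition 4.2.
If `φ` is a continuous 3×3-matrix-valued map whose rank-≥-2 locus is dense, and a continuous
function `ψ` is L²-orthogonal to `x ↦ trace (adjugate (φ x) * B x)` for every continuous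
test field `B`, then `ψ ≡ 0`. -/
theorem statement5
    {X : Type*} [TopologicalSpace X] [CompactSpace X] [T2Space X]
    [MeasurableSpace X] [BorelSpace X]
    (μ : Measure X) [IsFiniteMeasure μ] [μ.IsOpenPosMeasure]
    (φ : C(X, Matrix (Fin 3) (Fin 3) ℝ))
    (hφ : Dense {x : X | 2 ≤ (φ x).rank})
    (ψ : C(X, ℝ))
    (h : ∀ B : C(X, Matrix (Fin 3) (Fin 3) ℝ),
        ∫ x, ((φ x).adjugate * B x).trace * ψ x ∂μ = 0) :
    ∀ x : X, ψ x = 0 := by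
  exact DFunLike.congr_fun <| statement5_general μ φ
    (hφ.mono fun _ hx => Nat.succ_le_succ hx) ψ fun B _ => h B
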